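/- arXiv:2504.03714 — 2 statements merged into one kernel-verified Lean document; each statement's English description precedes it below -/
import Mathlib

section
/- Let f : ℝ^d → ℝ be differentiable at ω₀, let G : ℝ^d → ℝ^{d×d} be a continuous map taking values in symmetric positive semidefinite matrices, and let ω : ℝ → ℝ^d be continuously differentiable with ω(0) = ω₀ and ω'(0) = h satisfying hᵀ G(ω₀) h > 0. With S(t) = ∫₀ᵗ √(ω'(s)ᵀ G(ω(s)) ω'(s)) ds, one has lim_{t→0⁺} (f(ω(t)) − f(ω₀))² / S(t)² = (∇f(ω₀)ᵀ h)² / (hᵀ G(ω₀) h). -/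
/-!
Both `t ↦ f (ω t)` and the arc length `S` are differentiable at `0`, with derivatives `∇f(ω₀)ᵀh`
(chain rule) and `√(hᵀG(ω₀)h) > 0` (fundamental theorem of calculus, the speed being continuous).
For `t > 0` the quotient is the ratio of the squared slopes of these two functions at `0`, so it
converges to the ratio of the squared derivatives.
-/

open Filter Topology Matrix

/-- Per-curve limit in the definition of FI: with `S(t)` the arc length of the curve `ω`
for the metric tensor field `G`, and `h = ω'(0)` satisfying `hᵀG(ω₀)h > 0`,
`lim_{t→0⁺} (f(ω(t)) − f(ω₀))²/S(t)² = (∇f(ω₀)ᵀh)²/(hᵀG(ω₀)h)`. -/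
theorem fi_per_curve_limit {d : ℕ} (f : (Fin d → ℝ) → ℝ) (ω₀ : Fin d → ℝ)
    (hf : DifferentiableAt ℝ f ω₀)
    (G : (Fin d → ℝ) → Matrix (Fin d) (Fin d) ℝ)
    (hGcont : Continuous G) (hGpsd : ∀ x, (G x).PosSemidef)
    (ω : ℝ → Fin d → ℝ) (hω : ContDiff ℝ 1 ω) (h : Fin d → ℝ)
    (hω0 : ω 0 = ω₀) (hderiv : deriv ω 0 = h) (hpos : 0 < h ⬝ᵥ (G ω₀).mulVec h)
    (S : ℝ → ℝ)
    (hS : ∀ t, S t = ∫ s in (0:ℝ)..t,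
      Real.sqrt (deriv ω s ⬝ᵥ (G (ω s)).mulVec (deriv ω s))) :
    Tendsto (fun t : ℝ => (f (ω t) - f ω₀) ^ 2 / S t ^ 2) (𝓝[>] 0)
      (𝓝 ((fderiv ℝ f ω₀ h) ^ 2 / (h ⬝ᵥ (G ω₀).mulVec h))) := by
  have hd : HasDerivAt ω h 0 := by
    rw [← hderiv]
    exact (hω.differentiable one_ne_zero 0).hasDerivAt
  have hnum : HasDerivAt (fun t => f (ω t)) (fderiv ℝ f ω₀ h) 0 := by
    have hf' : HasFDerivAt f (fderiv ℝ f ω₀) (ω 0) := by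
      rw [hω0]
      exact hf.hasFDerivAt
    exact hf'.comp_hasDerivAt 0 hd
  have hcd : Continuous (deriv ω) := hω.continuous_deriv le_rfl
  have hspeed : Continuous fun s =>
      Real.sqrt (deriv ω s ⬝ᵥ (G (ω s)).mulVec (deriv ω s)) :=
    (hcd.dotProduct ((hGcont.comp hω.continuous).matrix_mulVec hcd)).sqrt
  have hden : HasDerivAt S (Real.sqrt (h ⬝ᵥ (G ω₀).mulVec h)) 0 := by
    have := intervalIntegral.integral_hasDerivAt_right (hspeed.intervalIntegrable 0 0)
      (hspeed.stronglyMeasurableAtFilter _ _) hspeed.continuousAt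
    rw [hderiv, hω0] at this
    rwa [show S = _ from funext hS]
  have hS0 : S 0 = 0 := by simp [hS]
  have hlim := (hnum.tendsto_slope.pow 2).div (hden.tendsto_slope.pow 2)
    (pow_ne_zero 2 (Real.sqrt_pos.2 hpos).ne')
  rw [Real.sq_sqrt hpos.le] at hlim
  refine (hlim.mono_left (nhdsWithin_mono 0 fun t ht => ne_of_gt ht)).congr' ?_
  -- The common factor `t⁻¹` of the two slopes cancels, since `t ≠ 0`.
  filter_upwards [self_mem_nhdsWithin] with t ht
  have ht' : t ≠ 0 := ne_of_gt ht
  simp only [Pi.div_apply, slope_def_field, hω0, hS0, sub_zero, div_pow]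
  exact div_div_div_cancel_right₀ (pow_ne_zero 2 ht') _ _
end

section
/- Let f : ℝ^d → ℝ be differentiable at ω₀, and let G : ℝ^d → ℝ^{d×d} be continuous with G(ω₀) symmetric positive definite. For each continuously differentiable curve ω : ℝ → ℝ^d with ω(0) = ω₀ and ω'(0) ≠ 0, let L(ω) = lim_{t→0⁺} (f(ω(t)) − f(ω₀))² / S(t)², where S(t) = ∫₀ᵗ √(ω'(s)ᵀ G(ω(s)) ω'(s)) ds. Then the supremum of L(ω) over all such curves equals ∇f(ω₀)ᵀ G(ω₀)⁻¹ ∇f(ω₀). -/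
open Filter Topology Matrix

/-!
Along a `C¹` curve `ω` with `ω 0 = ω₀` and `ω' 0 = v ≠ 0`, the chain rule gives
`f (ω t) - f ω₀ = t (g ⬝ᵥ v) + o(t)`, and the fundamental theorem of calculus gives
`S t = t √(v ⬝ᵥ G v) + o(t)`, where `G = G ω₀`. Hence the limit always exists and equals
`(g ⬝ᵥ v)² / (v ⬝ᵥ G v)` (`tendsto_curve_quotient`). The Cauchy–Schwarz inequality for the inner
product defined by `G` bounds this by `g ⬝ᵥ G⁻¹ g` (`sq_dotProduct_le_of_posDef`), and the straight
line in direction `v = G⁻¹ g` attains the bound when `g ≠ 0`. When `g = 0` every limit is `0`,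
as is the right-hand side; for `d = 0` there are no curves and both sides are `0`.
-/

/-- Cauchy–Schwarz for the inner product of `A`, applied to `A⁻¹ g` and `v`. -/
lemma sq_dotProduct_le_of_posDef {d : ℕ} {A : Matrix (Fin d) (Fin d) ℝ} (hA : A.PosDef)
    (g v : Fin d → ℝ) (hv : v ≠ 0) :
    (g ⬝ᵥ v) ^ 2 ≤ (g ⬝ᵥ A⁻¹.mulVec g) * (v ⬝ᵥ A.mulVec v) := by
  have hdet : IsUnit A.det := (Matrix.isUnit_iff_isUnit_det A).1 hA.isUnit
  have hsymm : Aᵀ = A := by simpa [Matrix.IsHermitian] using hA.isHermitian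
  set u := A⁻¹.mulVec g with hu
  have hAu : A.mulVec u = g := by
    rw [hu, Matrix.mulVec_mulVec, Matrix.mul_nonsing_inv A hdet, Matrix.one_mulVec]
  have hQv : 0 < v ⬝ᵥ A.mulVec v := by simpa using hA.dotProduct_mulVec_pos hv
  have huv : u ⬝ᵥ A.mulVec v = g ⬝ᵥ v := by
    rw [Matrix.dotProduct_mulVec, ← Matrix.mulVec_transpose, hsymm, hAu]
  set q := v ⬝ᵥ A.mulVec v with hq
  set c := g ⬝ᵥ v with hc
  have hvg : v ⬝ᵥ g = c := dotProduct_comm _ _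
  have hug : u ⬝ᵥ g = g ⬝ᵥ u := dotProduct_comm _ _
  -- Positivity on `q • u - c • v` expands to `0 ≤ q * (q * (g ⬝ᵥ u) - c ^ 2)`.
  have hpos : 0 ≤ (q • u - c • v) ⬝ᵥ A.mulVec (q • u - c • v) := by
    simpa using hA.posSemidef.dotProduct_mulVec_nonneg (q • u - c • v)
  have hexp : (q • u - c • v) ⬝ᵥ A.mulVec (q • u - c • v) = q * ((g ⬝ᵥ u) * q - c ^ 2) := by
    simp only [Matrix.mulVec_sub, Matrix.mulVec_smul, hAu, sub_dotProduct, dotProduct_sub,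
      smul_dotProduct, dotProduct_smul, smul_eq_mul, huv, hvg, hug, ← hq]
    ring
  rw [hexp] at hpos
  linarith [nonneg_of_mul_nonneg_right hpos hQv]

/-- The Fréchet derivative of `f` acts as the dot product with the vector of partials. -/
lemma fderiv_eq_dotProduct {d : ℕ} (f : (Fin d → ℝ) → ℝ) (ω₀ v : Fin d → ℝ) :
    fderiv ℝ f ω₀ v = (fun i => fderiv ℝ f ω₀ (Pi.single i 1)) ⬝ᵥ v := by
  conv_lhs => rw [pi_eq_sum_univ' v]
  simp [dotProduct, mul_comm]

/-- The limit along a curve exists and depends on the curve only through its initial velocity. -/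
lemma tendsto_curve_quotient {d : ℕ} (f : (Fin d → ℝ) → ℝ) (ω₀ : Fin d → ℝ)
    (hf : DifferentiableAt ℝ f ω₀)
    (G : (Fin d → ℝ) → Matrix (Fin d) (Fin d) ℝ)
    (hGcont : Continuous G) (hGpd : (G ω₀).PosDef)
    (ω : ℝ → Fin d → ℝ) (hω : ContDiff ℝ 1 ω) (h0 : ω 0 = ω₀) (hv : deriv ω 0 ≠ 0) :
    Tendsto (fun t : ℝ => (f (ω t) - f ω₀) ^ 2 /
        (∫ s in (0:ℝ)..t,
          Real.sqrt (deriv ω s ⬝ᵥ (G (ω s)).mulVec (deriv ω s))) ^ 2)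
      (𝓝[>] 0) (𝓝 (((fun i => fderiv ℝ f ω₀ (Pi.single i 1)) ⬝ᵥ deriv ω 0) ^ 2 /
        (deriv ω 0 ⬝ᵥ (G ω₀).mulVec (deriv ω 0)))) := by
  have hQ : 0 < deriv ω 0 ⬝ᵥ (G ω₀).mulVec (deriv ω 0) := by
    simpa using hGpd.dotProduct_mulVec_pos hv
  have hd : Continuous (deriv ω) := hω.continuous_deriv le_rfl
  have hcont : Continuous fun s =>
      Real.sqrt (deriv ω s ⬝ᵥ (G (ω s)).mulVec (deriv ω s)) :=
    (hd.dotProduct ((hGcont.comp hω.continuous).matrix_mulVec hd)).sqrt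
  have hS := (hcont.integral_hasStrictDerivAt 0 0).hasDerivAt
  have hωd : HasDerivAt ω (deriv ω 0) 0 := (hω.differentiable one_ne_zero 0).hasDerivAt
  have hF : HasDerivAt (fun t => f (ω t)) (fderiv ℝ f ω₀ (deriv ω 0)) 0 := by
    subst h0
    exact hf.hasFDerivAt.comp_hasDerivAt 0 hωd
  have hle : 𝓝[>] (0:ℝ) ≤ 𝓝[≠] 0 := nhdsWithin_mono _ fun x hx => ne_of_gt hx
  have t1 := hF.tendsto_slope.mono_left hle
  have t2 := hS.tendsto_slope.mono_left hle
  have hne : (Real.sqrt (deriv ω 0 ⬝ᵥ (G (ω 0)).mulVec (deriv ω 0))) ^ 2 ≠ 0 := by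
    rw [h0, Real.sq_sqrt hQ.le]
    exact hQ.ne'
  have t3 := (t1.pow 2).div (t2.pow 2) hne
  rw [h0, Real.sq_sqrt hQ.le, fderiv_eq_dotProduct] at t3
  refine t3.congr' ?_
  filter_upwards [self_mem_nhdsWithin] with t ht
  have ht' : t ≠ 0 := ne_of_gt ht
  -- The common factor `t⁻¹` of the two slopes cancels.
  simp only [Pi.div_apply, slope_def_field, intervalIntegral.integral_same, sub_zero,
    h0, div_pow]
  exact div_div_div_cancel_right₀ (pow_ne_zero 2 ht') _ _

/-- Closed form of FI (Theorem 3.2): the supremum over continuously differentiable curves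
`ω` through `ω₀` with nonzero initial velocity of the limit
`lim_{t→0⁺} (f(ω(t)) − f(ω₀))²/S(t)²`, where `S(t)` is the arc length for the metric
tensor field `G`, equals `∇f(ω₀)ᵀ G(ω₀)⁻¹ ∇f(ω₀)` when `G(ω₀)` is positive definite. -/
theorem fi_closed_form {d : ℕ} (f : (Fin d → ℝ) → ℝ) (ω₀ : Fin d → ℝ)
    (hf : DifferentiableAt ℝ f ω₀)
    (G : (Fin d → ℝ) → Matrix (Fin d) (Fin d) ℝ)
    (hGcont : Continuous G) (hGpd : (G ω₀).PosDef)
    (g : Fin d → ℝ) (hg : g = fun i => fderiv ℝ f ω₀ (Pi.single i 1)) :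
    sSup {L : ℝ | ∃ ω : ℝ → Fin d → ℝ, ContDiff ℝ 1 ω ∧ ω 0 = ω₀ ∧ deriv ω 0 ≠ 0 ∧
        Tendsto (fun t : ℝ => (f (ω t) - f ω₀) ^ 2 /
            (∫ s in (0:ℝ)..t,
              Real.sqrt (deriv ω s ⬝ᵥ (G (ω s)).mulVec (deriv ω s))) ^ 2)
          (𝓝[>] 0) (𝓝 L)}
      = g ⬝ᵥ (G ω₀)⁻¹.mulVec g := by
  have hray : ∀ v : Fin d → ℝ, deriv (fun t : ℝ => ω₀ + t • v) 0 = v := fun v => by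
    simpa using (((hasDerivAt_id (0:ℝ)).smul_const v).const_add ω₀).deriv
  -- The straight line in direction `v` realises the value `(g ⬝ᵥ v)² / (v ⬝ᵥ G v)`.
  have hmem : ∀ v : Fin d → ℝ, v ≠ 0 → ∃ ω : ℝ → Fin d → ℝ, ContDiff ℝ 1 ω ∧ ω 0 = ω₀ ∧
      deriv ω 0 ≠ 0 ∧ Tendsto (fun t : ℝ => (f (ω t) - f ω₀) ^ 2 /
            (∫ s in (0:ℝ)..t,
              Real.sqrt (deriv ω s ⬝ᵥ (G (ω s)).mulVec (deriv ω s))) ^ 2)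
          (𝓝[>] 0) (𝓝 ((g ⬝ᵥ v) ^ 2 / (v ⬝ᵥ (G ω₀).mulVec v))) := by
    intro v hv
    have hc : ContDiff ℝ 1 (fun t : ℝ => ω₀ + t • v) := by fun_prop
    have h0 : (fun t : ℝ => ω₀ + t • v) 0 = ω₀ := by simp
    have hne : deriv (fun t : ℝ => ω₀ + t • v) 0 ≠ 0 := by rwa [hray]
    refine ⟨_, hc, h0, hne, ?_⟩
    have := tendsto_curve_quotient f ω₀ hf G hGcont hGpd _ hc h0 hne
    rwa [hray v, ← hg] at this
  rcases Nat.eq_zero_or_pos d with rfl | hd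
  · have hz : g ⬝ᵥ (G ω₀)⁻¹.mulVec g = 0 := by simp [dotProduct]
    rw [hz]
    convert Real.sSup_empty
    refine Set.eq_empty_of_forall_notMem ?_
    rintro L ⟨ω, -, -, hne, -⟩
    exact hne (Subsingleton.elim _ _)
  · refine IsGreatest.csSup_eq ⟨?_, ?_⟩
    · by_cases hg0 : g = 0
      · have hv : (Pi.single ⟨0, hd⟩ 1 : Fin d → ℝ) ≠ 0 := by simp
        have := hmem _ hv
        simpa only [hg0, zero_dotProduct, ne_eq, OfNat.ofNat_ne_zero, not_false_eq_true, zero_pow,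
          zero_div, Set.mem_ofPred_eq] using this
      · have hdet : IsUnit (G ω₀).det := (Matrix.isUnit_iff_isUnit_det _).1 hGpd.isUnit
        have hAu : (G ω₀).mulVec ((G ω₀)⁻¹.mulVec g) = g := by
          rw [Matrix.mulVec_mulVec, Matrix.mul_nonsing_inv _ hdet, Matrix.one_mulVec]
        have hu : (G ω₀)⁻¹.mulVec g ≠ 0 := fun h => hg0 (by rw [← hAu, h, Matrix.mulVec_zero])
        have := hmem _ hu
        rw [hAu, dotProduct_comm _ g, sq, mul_self_div_self] at this
        exact this
    · rintro L ⟨ω, hω, h0, hne, hL⟩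
      have hQ : 0 < deriv ω 0 ⬝ᵥ (G ω₀).mulVec (deriv ω 0) := by
        simpa using hGpd.dotProduct_mulVec_pos hne
      have hlim := tendsto_curve_quotient f ω₀ hf G hGcont hGpd ω hω h0 hne
      rw [← hg] at hlim
      rw [tendsto_nhds_unique hL hlim, div_le_iff₀ hQ]
      exact sq_dotProduct_le_of_posDef hGpd g _ hne
end
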